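/- arXiv:2307.06907 — 2 statements merged into one kernel-verified Lean document; each statement's English description precedes it below -/
import Mathlib

section
/- The difference ideal is Katětov below the Hindman ideal via the identity map; more precisely, Δ ≤_K FS witnessed by the identity: for every infinite A ⊆ ℕ with increasing enumeration (a_n), the set B = {∑_{i≤n} a_i : n ∈ ℕ} satisfies: for every finite K ⊆ ℕ there is a finite L ⊆ ℕ with Δ(B \ L) ⊆ FS(A \ K). -/
/-- `FS(A)`: all finite nonempty sums of distinct elements of `A`. -/
def FS (A : Set ℕ) : Set ℕ :=
  {m : ℕ | ∃ s : Finset ℕ, s.Nonempty ∧ ↑s ⊆ A ∧ m = ∑ i ∈ s, i}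

/-- `Δ(B)`: all positive differences of distinct elements of `B`. -/
def Del (B : Set ℕ) : Set ℕ :=
  {d : ℕ | ∃ a ∈ B, ∃ b ∈ B, b < a ∧ d = a - b}

/-- `Δ ≤_K FS` witnessed by the identity: for every infinite `A ⊆ ℕ` with increasing
enumeration `(a_n)`, the set `B = {∑_{i≤n} a_i : n ∈ ℕ}` of partial sums satisfies:
for every finite `K ⊆ ℕ` there is a finite `L ⊆ ℕ` with `Δ(B \ L) ⊆ FS(A \ K)`. -/
theorem Del_le_FS (A : Set ℕ) (hA : A.Infinite) :
    ∀ K : Set ℕ, K.Finite →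
      ∃ L : Set ℕ, L.Finite ∧
        Del ((Set.range fun n : ℕ => ∑ i ∈ Finset.range (n + 1), Nat.nth (· ∈ A) i) \ L)
          ⊆ FS (A \ K) := by
  intro K hK
  obtain ⟨M, hM⟩ := hK.bddAbove
  have hA' : (setOf (· ∈ A)).Infinite := hA
  have hmono : StrictMono (Nat.nth (· ∈ A)) := Nat.nth_strictMono hA'
  refine ⟨(fun n : ℕ => ∑ i ∈ Finset.range (n + 1), Nat.nth (· ∈ A) i) '' Set.Iic M,
    (Set.finite_Iic M).image _, ?_⟩
  rintro d ⟨a, ⟨⟨n, rfl⟩, hn⟩, b, ⟨⟨m, rfl⟩, hm⟩, hlt, rfl⟩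
  have hmM : M < m := by
    by_contra h
    exact hm ⟨m, not_lt.mp h, rfl⟩
  have hmn : m < n := by
    by_contra h
    refine absurd hlt (not_lt.mpr ?_)
    exact Finset.sum_le_sum_of_subset (Finset.range_mono (by omega))
  refine ⟨(Finset.Ico (m + 1) (n + 1)).image (Nat.nth (· ∈ A)), ?_, ?_, ?_⟩
  · exact (Finset.nonempty_Ico.mpr (by omega)).image _
  · intro x hx
    simp only [Finset.coe_image, Set.mem_image, Finset.mem_coe, Finset.mem_Ico] at hx
    obtain ⟨i, hi, rfl⟩ := hx
    refine ⟨Nat.nth_mem_of_infinite hA' i, fun hk => ?_⟩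
    have h1 := hM hk
    have h2 := hmono.le_apply (x := i)
    omega
  · rw [Finset.sum_image (fun x _ y _ h => hmono.injective h)]
    have := Finset.sum_range_add_sum_Ico (Nat.nth (· ∈ A)) (show m + 1 ≤ n + 1 by omega)
    simp only
    omega
end

section
/- If I is an ideal on Λ, then I is P⁻(Λ) (respectively P⁻) if and only if for every partition A of Λ (respectively of any I-positive set C) into sets belonging to I, there exists an I-positive set B (with B ⊆ C in the second case) such that B ∩ A is finite for each A ∈ A. -/
/-- An ideal on a countably infinite set `Λ`. -/
def IsIdealOn (Λ : Type*) (I : Set (Set Λ)) : Prop :=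
  I.Nonempty ∧
  (∀ A B : Set Λ, A ⊆ B → B ∈ I → A ∈ I) ∧
  (∀ A B : Set Λ, A ∈ I → B ∈ I → A ∪ B ∈ I) ∧
  (∀ A : Set Λ, A.Finite → A ∈ I) ∧
  (Set.univ : Set Λ) ∉ I

/-- `I` is `P⁻(Λ)`: for every `⊆`-decreasing sequence `A_n ∈ I⁺` with `A_0 = Λ` and
`A_n \ A_{n+1} ∈ I`, there is `B ∈ I⁺` with `B ⊆* A_n` for each `n`. -/
def PminusLambda {Λ : Type*} (I : Set (Set Λ)) : Prop :=
  ∀ A : ℕ → Set Λ, A 0 = Set.univ → (∀ n, A n ∉ I) → (∀ n, A (n + 1) ⊆ A n) →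
    (∀ n, A n \ A (n + 1) ∈ I) →
    ∃ B : Set Λ, B ∉ I ∧ ∀ n, (B \ A n).Finite

/-- `I` is `P⁻`: the same as `P⁻(Λ)` but without requiring `A_0 = Λ`. -/
def Pminus {Λ : Type*} (I : Set (Set Λ)) : Prop :=
  ∀ A : ℕ → Set Λ, (∀ n, A n ∉ I) → (∀ n, A (n + 1) ⊆ A n) →
    (∀ n, A n \ A (n + 1) ∈ I) →
    ∃ B : Set Λ, B ∉ I ∧ ∀ n, (B \ A n).Finite

theorem seq_to_part {Λ : Type*} [Countable Λ] (I : Set (Set Λ)) (hI : IsIdealOn Λ I)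
    (C : Set Λ) (hC : C ∉ I)
    (H : ∀ A : ℕ → Set Λ, A 0 = C → (∀ n, A n ∉ I) → (∀ n, A (n + 1) ⊆ A n) →
      (∀ n, A n \ A (n + 1) ∈ I) → ∃ B : Set Λ, B ∉ I ∧ ∀ n, (B \ A n).Finite)
    (S : Set (Set Λ)) (hS : ∀ A ∈ S, A ∈ I) (hd : S.PairwiseDisjoint id) (hU : ⋃₀ S = C) :
    ∃ B : Set Λ, B ∉ I ∧ B ⊆ C ∧ ∀ A ∈ S, (B ∩ A).Finite := by
  obtain ⟨-, hsub, hun, hfin, -⟩ := hI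
  obtain ⟨f, hf⟩ := exists_injective_nat Λ
  let A : ℕ → Set Λ := fun n => {x | x ∈ C ∧ ∀ y, f y < n → ∀ P ∈ S, y ∈ P → x ∉ P}
  have hA0 : A 0 = C := by
    ext x; simp [A]
  have hdec : ∀ n, A (n + 1) ⊆ A n := by
    rintro n x ⟨hx, h⟩
    exact ⟨hx, fun y hy => h y (by omega)⟩
  have hdiff : ∀ n, A n \ A (n + 1) ∈ I := by
    intro n
    by_cases hne : ∃ y, f y = n ∧ ∃ P ∈ S, y ∈ P
    · obtain ⟨y, hy, P, hP, hyP⟩ := hne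
      refine hsub _ P ?_ (hS P hP)
      rintro x ⟨⟨hx, h1⟩, h2⟩
      by_contra hxP
      apply h2
      refine ⟨hx, fun z hz Q hQ hzQ hxQ => ?_⟩
      rcases Nat.lt_succ_iff_lt_or_eq.mp hz with h | h
      · exact h1 z h Q hQ hzQ hxQ
      · have : z = y := hf (h.trans hy.symm)
        subst this
        have : Q = P := hd.elim_set hQ hP z hzQ hyP
        exact hxP (this ▸ hxQ)
    · refine hsub _ ∅ ?_ (hfin _ Set.finite_empty)
      rintro x ⟨⟨hx, h1⟩, h2⟩
      exfalso
      apply h2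
      refine ⟨hx, fun z hz Q hQ hzQ hxQ => ?_⟩
      rcases Nat.lt_succ_iff_lt_or_eq.mp hz with h | h
      · exact h1 z h Q hQ hzQ hxQ
      · exact hne ⟨z, h, Q, hQ, hzQ⟩
  have hpos : ∀ n, A n ∉ I := by
    intro n
    induction n with
    | zero => rwa [hA0]
    | succ n ih =>
      intro h
      refine ih (hsub _ _ ?_ (hun _ _ (hdiff n) h))
      intro x hx
      by_cases h' : x ∈ A (n + 1)
      · exact Or.inr h'
      · exact Or.inl ⟨hx, h'⟩
  obtain ⟨B, hB, hBf⟩ := H A hA0 hpos hdec hdiff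
  refine ⟨B ∩ C, fun h => hB ?_, Set.inter_subset_right, fun P hP => ?_⟩
  · refine hsub _ _ ?_ (hun _ _ h (hfin _ (hBf 0)))
    rw [hA0, Set.inter_union_sdiff]
  · rcases P.eq_empty_or_nonempty with rfl | ⟨y, hy⟩
    · simp
    · refine (hBf (f y + 1)).subset ?_
      rintro x ⟨⟨hxB, -⟩, hxP⟩
      exact ⟨hxB, fun h => h.2 y (Nat.lt_succ_self _) P hP hy hxP⟩

theorem part_to_seq {Λ : Type*} (I : Set (Set Λ)) (A : ℕ → Set Λ)
    (H : ∀ S : Set (Set Λ), (∀ A ∈ S, A ∈ I) → S.PairwiseDisjoint id → ⋃₀ S = A 0 →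
      ∃ B : Set Λ, B ∉ I ∧ B ⊆ A 0 ∧ ∀ A ∈ S, (B ∩ A).Finite)
    (hdec : ∀ n, A (n + 1) ⊆ A n) (hdiff : ∀ n, A n \ A (n + 1) ∈ I) :
    ∃ B : Set Λ, B ∉ I ∧ ∀ n, (B \ A n).Finite := by
  have hanti : Antitone A := antitone_nat_of_succ_le hdec
  by_cases hD : (⋂ n, A n) ∈ I
  swap
  · refine ⟨_, hD, fun n => ?_⟩
    rw [Set.sdiff_eq_empty.mpr (Set.iInter_subset A n)]
    exact Set.finite_empty
  have h3 := H (insert (⋂ n, A n) (Set.range fun n => A n \ A (n + 1))) ?_ ?_ ?_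
  · obtain ⟨B, hB, hBC, hBf⟩ := h3
    refine ⟨B, hB, fun n => ?_⟩
    induction n with
    | zero => rw [Set.sdiff_eq_empty.mpr hBC]; exact Set.finite_empty
    | succ n ih =>
      refine (ih.union (hBf (A n \ A (n + 1)) (Or.inr ⟨n, rfl⟩))).subset ?_
      rintro x ⟨hx, h⟩
      by_cases h' : x ∈ A n
      · exact Or.inr ⟨hx, h', h⟩
      · exact Or.inl ⟨hx, h'⟩
  · rintro _ (rfl | ⟨n, rfl⟩)
    · exact hD
    · exact hdiff n
  · have key : ∀ m n x, x ∈ A m \ A (m + 1) → x ∈ A n \ A (n + 1) → m ≤ n := by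
      intro m n x h1 h2
      by_contra hlt
      exact h2.2 (hanti (by omega : n + 1 ≤ m) h1.1)
    intro P hP Q hQ hne
    rw [Function.onFun, id, id, Set.disjoint_left]
    intro x hxP hxQ
    apply hne
    rcases hP with rfl | ⟨m, rfl⟩ <;> rcases hQ with rfl | ⟨n, rfl⟩
    · rfl
    · exact absurd (Set.mem_iInter.mp hxP _) hxQ.2
    · exact absurd (Set.mem_iInter.mp hxQ _) hxP.2
    · have : m = n := le_antisymm (key _ _ x hxP hxQ) (key _ _ x hxQ hxP)
      rw [this]
  · ext x
    constructor
    · rintro ⟨_, (rfl | ⟨n, rfl⟩), hx⟩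
      · exact Set.mem_iInter.mp hx 0
      · exact hanti (Nat.zero_le n) hx.1
    · intro hx
      by_cases h : ∃ n, x ∈ A n \ A (n + 1)
      · obtain ⟨n, hn⟩ := h
        exact ⟨_, Or.inr ⟨n, rfl⟩, hn⟩
      · refine ⟨_, Or.inl rfl, Set.mem_iInter.mpr fun n => ?_⟩
        induction n with
        | zero => exact hx
        | succ n ih =>
          by_contra h'
          exact h ⟨n, ih, h'⟩

/-- An ideal `I` on `Λ` is `P⁻(Λ)` (resp. `P⁻`) iff for every partition of `Λ`
(resp. of any `I`-positive set `C`) into sets from `I`, there is an `I`-positive `B`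
(with `B ⊆ C` in the second case) meeting each piece of the partition in a finite
set. -/
theorem Pminus_iff_partition {Λ : Type*} [Countable Λ] [Infinite Λ]
    (I : Set (Set Λ)) (hI : IsIdealOn Λ I) :
    (PminusLambda I ↔
      ∀ 𝒜 : Set (Set Λ), (∀ A ∈ 𝒜, A ∈ I) → 𝒜.PairwiseDisjoint id → ⋃₀ 𝒜 = Set.univ →
        ∃ B : Set Λ, B ∉ I ∧ ∀ A ∈ 𝒜, (B ∩ A).Finite) ∧
    (Pminus I ↔
      ∀ C : Set Λ, C ∉ I →
        ∀ 𝒜 : Set (Set Λ), (∀ A ∈ 𝒜, A ∈ I) → 𝒜.PairwiseDisjoint id → ⋃₀ 𝒜 = C →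
          ∃ B : Set Λ, B ∉ I ∧ B ⊆ C ∧ ∀ A ∈ 𝒜, (B ∩ A).Finite) := by
  refine ⟨⟨fun H S hS hd hU => ?_, fun H A h0 _ hdec hdiff => ?_⟩,
    ⟨fun H C hC S hS hd hU => ?_, fun H A hpos hdec hdiff => ?_⟩⟩
  · obtain ⟨B, hB, -, h⟩ := seq_to_part I hI Set.univ hI.2.2.2.2 H S hS hd hU
    exact ⟨B, hB, h⟩
  · refine part_to_seq I A (fun S hS hd hU => ?_) hdec hdiff
    obtain ⟨B, hB, h⟩ := H S hS hd (hU.trans h0)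
    exact ⟨B, hB, h0 ▸ Set.subset_univ B, h⟩
  · exact seq_to_part I hI C hC (fun A _ => H A) S hS hd hU
  · exact part_to_seq I A (H (A 0) (hpos 0)) hdec hdiff
end
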